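/- Let V be a module over the N=2 Ramond algebra 𝔤 with c₀ = 0, let a, b, c ∈ ℂ, and let (u_i)_{i∈ℤ} be vectors in V such that L_m u_i = (a + bm + i)u_{m+i}, H_m u_i = c·u_{m+i}, and G_m^- u_i = 0 for all m, i ∈ ℤ. Then for all r₁, r₂, r₃, s₁, s₂, s₃, i ∈ ℤ: G_{r₁}^- G_{r₂}^- G_{r₃}^- G_{s₁}^+ G_{s₂}^+ G_{s₃}^+ u_i = 0. -/

import Mathlib

open Submodule

/-- A module over the `N = 2` Ramond algebra `𝔤`: a `ℤ/2`-graded complex vector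
space `V = even ⊕ odd` with parity-preserving operators `L m`, `H m`,
parity-reversing operators `Gp m` (`G_m^+`), `Gm m` (`G_m^-`), and a scalar `c₀`
(the action of the central element `C`), subject to the defining relations. -/
structure RamondRep (V : Type) [AddCommGroup V] [Module ℂ V] : Type where
  L : ℤ → V →ₗ[ℂ] V
  H : ℤ → V →ₗ[ℂ] V
  Gp : ℤ → V →ₗ[ℂ] V
  Gm : ℤ → V →ₗ[ℂ] V
  c₀ : ℂ
  even : Submodule ℂ V
  odd : Submodule ℂ V
  grading : IsCompl even odd
  L_even : ∀ (m : ℤ), ∀ v ∈ even, L m v ∈ even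
  L_odd : ∀ (m : ℤ), ∀ v ∈ odd, L m v ∈ odd
  H_even : ∀ (m : ℤ), ∀ v ∈ even, H m v ∈ even
  H_odd : ∀ (m : ℤ), ∀ v ∈ odd, H m v ∈ odd
  Gp_even : ∀ (m : ℤ), ∀ v ∈ even, Gp m v ∈ odd
  Gp_odd : ∀ (m : ℤ), ∀ v ∈ odd, Gp m v ∈ even
  Gm_even : ∀ (m : ℤ), ∀ v ∈ even, Gm m v ∈ odd
  Gm_odd : ∀ (m : ℤ), ∀ v ∈ odd, Gm m v ∈ even
  rel_LL : ∀ (m n : ℤ) (v : V),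
    L m (L n v) - L n (L m v) =
      ((n : ℂ) - (m : ℂ)) • L (m + n) v +
        ((1 / 12 : ℂ) * ((n : ℂ) ^ 3 - (n : ℂ)) *
          (if m + n = 0 then (1 : ℂ) else 0) * c₀) • v
  rel_HH : ∀ (m n : ℤ) (v : V),
    H m (H n v) - H n (H m v) =
      ((1 / 3 : ℂ) * (m : ℂ) * (if m + n = 0 then (1 : ℂ) else 0) * c₀) • v
  rel_LH : ∀ (m n : ℤ) (v : V),
    L m (H n v) - H n (L m v) = (n : ℂ) • H (m + n) v
  rel_LGp : ∀ (m p : ℤ) (v : V),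
    L m (Gp p v) - Gp p (L m v) = ((p : ℂ) - (m : ℂ) / 2) • Gp (p + m) v
  rel_LGm : ∀ (m p : ℤ) (v : V),
    L m (Gm p v) - Gm p (L m v) = ((p : ℂ) - (m : ℂ) / 2) • Gm (p + m) v
  rel_HGp : ∀ (m p : ℤ) (v : V),
    H m (Gp p v) - Gp p (H m v) = Gp (m + p) v
  rel_HGm : ∀ (m p : ℤ) (v : V),
    H m (Gm p v) - Gm p (H m v) = -(Gm (m + p) v)
  rel_GpGm : ∀ (p q : ℤ) (v : V),
    Gp p (Gm q v) + Gm q (Gp p v) =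
      (-2 : ℂ) • L (p + q) v + ((p : ℂ) - (q : ℂ)) • H (p + q) v +
        ((1 / 3 : ℂ) * ((p : ℂ) ^ 2 - 1 / 4) *
          (if p + q = 0 then (1 : ℂ) else 0) * c₀) • v
  rel_GpGp : ∀ (p q : ℤ) (v : V), Gp p (Gp q v) + Gp q (Gp p v) = 0
  rel_GmGm : ∀ (p q : ℤ) (v : V), Gm p (Gm q v) + Gm q (Gm p v) = 0

namespace RamondRep

variable {V : Type} [AddCommGroup V] [Module ℂ V]

/-- The weight space `V_μ = {v ∈ V : L₀ v = μ v}`. -/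
def wt (ρ : RamondRep V) (μ : ℂ) : Submodule ℂ V :=
  Module.End.eigenspace (ρ.L 0) μ

/-- The parity components, indexed by `ZMod 2`. -/
def parity (ρ : RamondRep V) (τ : ZMod 2) : Submodule ℂ V :=
  if τ = 0 then ρ.even else ρ.odd

/-- `V` is a weight module: it is the sum of its weight spaces. -/
def IsWeight (ρ : RamondRep V) : Prop := (⨆ μ : ℂ, ρ.wt μ) = ⊤

/-- `V` is cuspidal: a weight module with uniformly bounded weight multiplicities
in each parity. -/
def Cuspidal (ρ : RamondRep V) : Prop :=
  ρ.IsWeight ∧ ∃ p : ℕ, ∀ (μ : ℂ) (τ : ZMod 2),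
    Module.rank ℂ ↥(ρ.wt μ ⊓ ρ.parity τ) ≤ (p : Cardinal)

/-- A subspace invariant under all the operators. -/
def IsSubmod (ρ : RamondRep V) (W : Submodule ℂ V) : Prop :=
  (∀ (m : ℤ), ∀ v ∈ W, ρ.L m v ∈ W) ∧ (∀ (m : ℤ), ∀ v ∈ W, ρ.H m v ∈ W) ∧
    (∀ (m : ℤ), ∀ v ∈ W, ρ.Gp m v ∈ W) ∧ (∀ (m : ℤ), ∀ v ∈ W, ρ.Gm m v ∈ W)

/-- A graded subspace invariant under all the operators. -/
def IsGradedSubmod (ρ : RamondRep V) (W : Submodule ℂ V) : Prop :=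
  ρ.IsSubmod W ∧ W = (W ⊓ ρ.even) ⊔ (W ⊓ ρ.odd)

/-- The trivial representation: all operators act by zero. -/
def IsTrivialRep (ρ : RamondRep V) : Prop :=
  ∀ (m : ℤ) (v : V), ρ.L m v = 0 ∧ ρ.H m v = 0 ∧ ρ.Gp m v = 0 ∧ ρ.Gm m v = 0

/-- `V` is simple: nontrivial, and its only graded submodules are `⊥` and `⊤`. -/
def IsSimple (ρ : RamondRep V) : Prop :=
  ¬ ρ.IsTrivialRep ∧
    ∀ W : Submodule ℂ V, ρ.IsGradedSubmod W → W = ⊥ ∨ W = ⊤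

/-- `V` is generated by `v` as a `𝔤`-module. -/
def GeneratedBy (ρ : RamondRep V) (v : V) : Prop :=
  ∀ W : Submodule ℂ V, ρ.IsSubmod W → v ∈ W → W = ⊤

/-- `V` is a highest weight module. -/
def IsHighestWeight (ρ : RamondRep V) : Prop :=
  ∃ v : V, v ≠ 0 ∧ ρ.GeneratedBy v ∧
    (∃ h h' : ℂ, ρ.L 0 v = h • v ∧ ρ.H 0 v = h' • v) ∧
    (∀ m : ℤ, 0 < m → ρ.L m v = 0 ∧ ρ.H m v = 0 ∧ ρ.Gp m v = 0 ∧ ρ.Gm m v = 0) ∧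
    ρ.Gp 0 v = 0

/-- `V` is a lowest weight module. -/
def IsLowestWeight (ρ : RamondRep V) : Prop :=
  ∃ v : V, v ≠ 0 ∧ ρ.GeneratedBy v ∧
    (∃ h h' : ℂ, ρ.L 0 v = h • v ∧ ρ.H 0 v = h' • v) ∧
    (∀ m : ℤ, m < 0 → ρ.L m v = 0 ∧ ρ.H m v = 0 ∧ ρ.Gp m v = 0 ∧ ρ.Gm m v = 0) ∧
    ρ.Gm 0 v = 0

end RamondRep

/-!
Since the central charge vanishes, `G_r^- G_s^+ u_i` is a multiple of `u_{r+s+i}` by a scalar that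
is affine in `r`, `s` and `i`. Moreover `[{G_r^-, G_s^+}, G_t^+] = 2(s - t) G_{r+s+t}^+`, and
together these give
`G_q^- G_r^- G_s^+ G_t^+ u_i = (2b + c)(2b - c - 2)(q - r)(s - t) u_{q+r+s+t+i}`.
Moving one more `G_r^-` through a product `G_s^+ G_t^+ G_w^+` produces a sum over the cyclic
permutations of `(s, t, w)`; applying `G_p^- G_q^-` to it leaves the cyclic sums of
`(s - t)(r + s + t - w)` and of `(s - t)` times an affine function of `w`, and both vanish.
-/

namespace RamondRep

variable {V : Type} [AddCommGroup V] [Module ℂ V] (ρ : RamondRep V)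

theorem L_Gp_apply (m p : ℤ) (v : V) :
    ρ.L m (ρ.Gp p v) = ρ.Gp p (ρ.L m v) + ((p : ℂ) - m / 2) • ρ.Gp (p + m) v :=
  sub_eq_iff_eq_add'.mp (ρ.rel_LGp m p v)

theorem H_Gp_apply (m p : ℤ) (v : V) :
    ρ.H m (ρ.Gp p v) = ρ.Gp p (ρ.H m v) + ρ.Gp (m + p) v :=
  sub_eq_iff_eq_add'.mp (ρ.rel_HGp m p v)

theorem Gp_Gp_apply_comm (p q : ℤ) (v : V) :
    ρ.Gp p (ρ.Gp q v) = -ρ.Gp q (ρ.Gp p v) :=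
  eq_neg_of_add_eq_zero_left (ρ.rel_GpGp p q v)

theorem Gm_Gp_Gp_apply (r s t : ℤ) (v : V) :
    ρ.Gm r (ρ.Gp s (ρ.Gp t v)) =
      (2 * ((s : ℂ) - t)) • ρ.Gp (r + s + t) v + ρ.Gp t (ρ.Gm r (ρ.Gp s v))
        - ρ.Gp s (ρ.Gm r (ρ.Gp t v)) + ρ.Gp t (ρ.Gp s (ρ.Gm r v)) := by
  -- The scalars by which `C` acts commute with `G_t^+`, so they cancel in `on_Gp - under_Gp`.
  have on_Gp := ρ.rel_GpGm s r (ρ.Gp t v)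
  have under_Gp := congrArg (ρ.Gp t) (ρ.rel_GpGm s r v)
  rw [L_Gp_apply, H_Gp_apply, show t + (s + r) = r + s + t by ring,
    show s + r + t = r + s + t by ring] at on_Gp
  simp only [map_add, map_smul] at under_Gp
  push_cast at on_Gp
  linear_combination (norm := module) on_Gp - under_Gp

theorem Gm_Gp_Gp_Gp_apply {r : ℤ} {v : V} (hv : ρ.Gm r v = 0) (s t w : ℤ) :
    ρ.Gm r (ρ.Gp s (ρ.Gp t (ρ.Gp w v))) =
      (2 * ((s : ℂ) - t)) • ρ.Gp (r + s + t) (ρ.Gp w v)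
        + (2 * ((t : ℂ) - w)) • ρ.Gp (r + t + w) (ρ.Gp s v)
        + (2 * ((w : ℂ) - s)) • ρ.Gp (r + w + s) (ρ.Gp t v)
        + ρ.Gp s (ρ.Gp t (ρ.Gm r (ρ.Gp w v)))
        + ρ.Gp t (ρ.Gp w (ρ.Gm r (ρ.Gp s v)))
        + ρ.Gp w (ρ.Gp s (ρ.Gm r (ρ.Gp t v))) := by
  rw [Gm_Gp_Gp_apply, Gm_Gp_Gp_apply ρ r s w, Gm_Gp_Gp_apply ρ r t w, hv,
    ρ.Gp_Gp_apply_comm (r + t + w), ρ.Gp_Gp_apply_comm (r + w + s),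
    ρ.Gp_Gp_apply_comm w s (ρ.Gm r (ρ.Gp t v)),
    show r + w + s = r + s + w by ring]
  simp only [map_add, map_sub, map_smul, map_zero]
  module

/-- The scalar `λ` with `G_r^- G_s^+ u_i = λ u_{r+s+i}`, when the central charge is zero and
`L_m u_i = (a + bm + i) u_{m+i}`, `H_m u_i = c u_{m+i}`, `G_m^- u_i = 0`. -/
def gmGpCoeff (a b c : ℂ) (r s i : ℤ) : ℂ :=
  -2 * (a + b * (r + s) + i) + (s - r) * c

variable {ρ} {a b c : ℂ} {u : ℤ → V}

theorem Gm_Gp_apply_eq_gmGpCoeff_smul (hc : ρ.c₀ = 0)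
    (hL : ∀ m i : ℤ, ρ.L m (u i) = (a + b * m + i) • u (m + i))
    (hH : ∀ m i : ℤ, ρ.H m (u i) = c • u (m + i))
    (hG : ∀ m i : ℤ, ρ.Gm m (u i) = 0) (r s i : ℤ) :
    ρ.Gm r (ρ.Gp s (u i)) = gmGpCoeff a b c r s i • u (r + s + i) := by
  have anticomm := ρ.rel_GpGm s r (u i)
  rw [hG, map_zero, zero_add, hL, hH, hc, add_comm s r] at anticomm
  rw [anticomm, gmGpCoeff]
  push_cast
  module

theorem Gm_Gm_Gp_Gp_apply (hG : ∀ m i : ℤ, ρ.Gm m (u i) = 0)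
    (hGmGp : ∀ r s i : ℤ, ρ.Gm r (ρ.Gp s (u i)) = gmGpCoeff a b c r s i • u (r + s + i))
    {q r s t i n : ℤ} (hn : q + r + s + t + i = n) :
    ρ.Gm q (ρ.Gm r (ρ.Gp s (ρ.Gp t (u i)))) =
      ((2 * b + c) * (2 * b - c - 2) * (q - r) * (s - t)) • u n := by
  rw [Gm_Gp_Gp_apply, hG]
  simp only [hGmGp, map_add, map_sub, map_smul, map_zero]
  rw [show q + (r + s + t) + i = n by lia, show q + t + (r + s + i) = n by lia,
    show q + s + (r + t + i) = n by lia]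
  simp only [gmGpCoeff]
  push_cast
  module

end RamondRep

/-- Lemma 4.3 of the paper. If `(u i)` satisfies
`L_m u_i = (a + bm + i) u_{m+i}`, `H_m u_i = c u_{m+i}`, `G_m^- u_i = 0`, then
`G_{r₁}^- G_{r₂}^- G_{r₃}^- G_{s₁}^+ G_{s₂}^+ G_{s₃}^+ u_i = 0`. -/
theorem stmt10 {V : Type} [AddCommGroup V] [Module ℂ V] (ρ : RamondRep V)
    (hc : ρ.c₀ = 0) (a b c : ℂ) (u : ℤ → V)
    (hL : ∀ m i : ℤ, ρ.L m (u i) = (a + b * (m : ℂ) + (i : ℂ)) • u (m + i))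
    (hH : ∀ m i : ℤ, ρ.H m (u i) = c • u (m + i))
    (hG : ∀ m i : ℤ, ρ.Gm m (u i) = 0) :
    ∀ r₁ r₂ r₃ s₁ s₂ s₃ i : ℤ,
      ρ.Gm r₁ (ρ.Gm r₂ (ρ.Gm r₃ (ρ.Gp s₁ (ρ.Gp s₂ (ρ.Gp s₃ (u i)))))) = 0 := by
  intro r₁ r₂ r₃ s₁ s₂ s₃ i
  have hGmGp := RamondRep.Gm_Gp_apply_eq_gmGpCoeff_smul hc hL hH hG
  have hGmGmGpGp {s t j n : ℤ} (hn : r₁ + r₂ + s + t + j = n) :=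
    RamondRep.Gm_Gm_Gp_Gp_apply hG hGmGp hn
  obtain ⟨n, hn⟩ : ∃ n, r₁ + r₂ + r₃ + s₁ + s₂ + s₃ + i = n := ⟨_, rfl⟩
  have cyclic_index : ((s₁ : ℂ) - s₂) * (r₃ + s₁ + s₂ - s₃) + (s₂ - s₃) * (r₃ + s₂ + s₃ - s₁)
      + (s₃ - s₁) * (r₃ + s₃ + s₁ - s₂) = 0 := by ring
  have cyclic_coeff : RamondRep.gmGpCoeff a b c r₃ s₃ i * (s₁ - s₂)
      + RamondRep.gmGpCoeff a b c r₃ s₁ i * (s₂ - s₃)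
      + RamondRep.gmGpCoeff a b c r₃ s₂ i * (s₃ - s₁) = 0 := by
    simp only [RamondRep.gmGpCoeff]; ring
  rw [ρ.Gm_Gp_Gp_Gp_apply (hG r₃ i)]
  simp only [hGmGp, map_add, map_smul]
  iterate 6 rw [hGmGmGpGp (n := n) (by lia)]
  push_cast
  linear_combination (norm := module)
    ((2 * b + c) * (2 * b - c - 2) * (r₁ - r₂) * (2 * cyclic_index + cyclic_coeff)) • u n
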